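/- In any nondegenerate triangle, the distance from the symmedian point X6 to the incenter X1 satisfies dist(X6, X1) ≤ (9 − 6√2)·dist(X6, X2), where X2 is the centroid. -/

import Mathlib

/-- The point with normalized barycentric coordinates `(x : y : z)`
with respect to the triangle `A B C`. -/
noncomputable def bary (A B C : EuclideanSpace ℝ (Fin 2)) (x y z : ℝ) :
    EuclideanSpace ℝ (Fin 2) :=
  (x + y + z)⁻¹ • (x • A + y • B + z • C)

/-- The triangle center with barycentric coordinates
`(f a b c : f b c a : f c a b)` where `a, b, c` are the side lengths. -/
noncomputable def tcenter (f : ℝ → ℝ → ℝ → ℝ) (A B C : EuclideanSpace ℝ (Fin 2)) :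
    EuclideanSpace ℝ (Fin 2) :=
  bary A B C (f (dist B C) (dist C A) (dist A B))
    (f (dist C A) (dist A B) (dist B C))
    (f (dist A B) (dist B C) (dist C A))

/-!
Write `a, b, c` for the side lengths. Squared distances between barycentric points turn the claim
into `I ≤ (3 - 2√2)² (a + b + c) G` for two symmetric forms `I` and `G` in `a, b, c`. If `c` is the
longest side, rescale to `a = 1 + e`, `b = 1 - e`, `c = t` with `1 ≤ t ≤ 2` and `|e| ≤ t - 1`. In
the isosceles case `e = 0` the claim reduces to `t ≤ (3 - 2√2) (t + 1) (t + 2)`, which is AM-GM for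
`t + 2 / t`, with equality for the right isosceles triangle `t = √2`. The remaining terms are `e²`
times a quantity that is already nonnegative when `(3 - 2√2)²` is replaced by `1 / 35`.
-/

section Forms

/-- The degree seven symmetric form `I` in the side lengths for which `dist X6 X1 ^ 2`
equals `I / ((a + b + c) * (a ^ 2 + b ^ 2 + c ^ 2) ^ 2)`. -/
def symmedianIncenterForm (a b c : ℝ) : ℝ :=
  a * b * c * (2 * (a ^ 2 + b ^ 2 + c ^ 2) * (a * b + b * c + c * a)
    - (a ^ 2 + b ^ 2 + c ^ 2) ^ 2 - 3 * (a * b * c) * (a + b + c))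

/-- The degree six symmetric form `G` in the side lengths for which `dist X6 X2 ^ 2`
equals `G / (3 * (a ^ 2 + b ^ 2 + c ^ 2)) ^ 2`. -/
def symmedianCentroidForm (a b c : ℝ) : ℝ :=
  6 * (a ^ 2 + b ^ 2 + c ^ 2) * (a ^ 2 * b ^ 2 + b ^ 2 * c ^ 2 + c ^ 2 * a ^ 2)
    - (a ^ 2 + b ^ 2 + c ^ 2) ^ 3 - 27 * (a * b * c) ^ 2

/-- The coefficient `q` in the expansion `I(1 + e, 1 - e, t) = I(1, 1, t) + e² q(t, e²)` of
`symmedianIncenterForm`, measuring the deviation from an isosceles triangle. -/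
def incenterAsymmetry (t d : ℝ) : ℝ :=
  t * (t ^ 4 - 4 * t ^ 3 + 2 * t ^ 2 + 12 * t - 8 - (14 * t - 3 * t ^ 2) * d + 8 * d ^ 2)

/-- The coefficient `r` in the expansion
`(2 + t) G(1 + e, 1 - e, t) = (2 + t) G(1, 1, t) + e² r(t, e²)` of `symmedianCentroidForm` times the
perimeter, measuring the deviation from an isosceles triangle. -/
def centroidAsymmetry (t d : ℝ) : ℝ :=
  (t + 2) * (6 * t ^ 4 + 66 * t ^ 2 - 36 - (9 * t ^ 2 + 36) * d + 4 * d ^ 2)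

lemma symmedianIncenterForm_rotate (a b c : ℝ) :
    symmedianIncenterForm b c a = symmedianIncenterForm a b c := by
  unfold symmedianIncenterForm; ring

lemma symmedianCentroidForm_rotate (a b c : ℝ) :
    symmedianCentroidForm b c a = symmedianCentroidForm a b c := by
  unfold symmedianCentroidForm; ring

lemma symmedianIncenterForm_mul (r a b c : ℝ) :
    symmedianIncenterForm (r * a) (r * b) (r * c) = r ^ 7 * symmedianIncenterForm a b c := by
  unfold symmedianIncenterForm; ring

lemma symmedianCentroidForm_mul (r a b c : ℝ) :
    symmedianCentroidForm (r * a) (r * b) (r * c) = r ^ 6 * symmedianCentroidForm a b c := by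
  unfold symmedianCentroidForm; ring

lemma symmedianIncenterForm_one_add_one_sub (e t : ℝ) :
    symmedianIncenterForm (1 + e) (1 - e) t =
      (t - 1) ^ 2 * (2 - t) * t ^ 2 + e ^ 2 * incenterAsymmetry t (e ^ 2) := by
  unfold symmedianIncenterForm incenterAsymmetry; ring

lemma perimeter_mul_symmedianCentroidForm_one_add_one_sub (e t : ℝ) :
    (1 + e + (1 - e) + t) * symmedianCentroidForm (1 + e) (1 - e) t =
      (t - 1) ^ 2 * (2 - t) * ((t + 1) * (t + 2)) ^ 2
        + e ^ 2 * centroidAsymmetry t (e ^ 2) := by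
  unfold symmedianCentroidForm centroidAsymmetry; ring

end Forms

section Constants

lemma three_sub_two_mul_sqrt_two_nonneg : 0 ≤ 3 - 2 * √2 := by
  have : √2 ≤ 3 / 2 := Real.sqrt_le_iff.2 ⟨by norm_num, by norm_num⟩
  linarith

lemma inv_thirtyFive_le_sq_three_sub_two_mul_sqrt_two : 1 / 35 ≤ (3 - 2 * √2) ^ 2 := by
  have hsqrt : √2 ≤ 99 / 70 := Real.sqrt_le_iff.2 ⟨by norm_num, by norm_num⟩
  have hsq : √2 ^ 2 = 2 := Real.sq_sqrt zero_le_two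
  linarith

lemma le_three_sub_two_mul_sqrt_two_mul (t : ℝ) :
    t ≤ (3 - 2 * √2) * ((t + 1) * (t + 2)) := by
  have hsq : √2 ^ 2 = 2 := Real.sq_sqrt zero_le_two
  have hgap : (3 - 2 * √2) * ((t + 1) * (t + 2)) - t = (3 - 2 * √2) * (t - √2) ^ 2 := by
    linear_combination -(4 * t + 3 - 2 * √2) * hsq
  have := mul_nonneg three_sub_two_mul_sqrt_two_nonneg (sq_nonneg (t - √2))
  linarith

end Constants

section Inequality

variable {t d : ℝ}

lemma centroidAsymmetry_nonneg (ht : 1 ≤ t) (hd : d ≤ t - 1) : 0 ≤ centroidAsymmetry t d := by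
  have hdt : (9 * t ^ 2 + 36) * d ≤ (9 * t ^ 2 + 36) * (t - 1) := by gcongr
  have hquartic : 0 ≤ 6 * t ^ 2 * (t - 1) ^ 2 + 36 * t * (t - 1) + 3 * t ^ 3 + 33 * t ^ 2 := by
    have : 0 ≤ t - 1 := sub_nonneg.2 ht
    positivity
  refine mul_nonneg (by linarith) ?_
  linarith [sq_nonneg d]

lemma incenterAsymmetry_zero_le (h1 : 1 ≤ t) (h2 : t ≤ 2) :
    35 * incenterAsymmetry t 0 ≤ centroidAsymmetry t 0 := by
  have : 0 ≤ t - 1 := sub_nonneg.2 h1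
  have : 0 ≤ 2 - t := sub_nonneg.2 h2
  have hquintic : 0 ≤ 3 + 119 * (t - 1) + 322 * (t - 1) ^ 2 + 292 * (t - 1) ^ 3
      + 22 * (t - 1) ^ 3 * (2 - t) + 29 * (t - 1) ^ 4 * (2 - t) := by positivity
  unfold incenterAsymmetry centroidAsymmetry
  linarith

lemma incenterAsymmetry_le (h1 : 1 ≤ t) (h2 : t ≤ 2) (hd0 : 0 ≤ d) (hd : d ≤ t - 1) :
    35 * incenterAsymmetry t d ≤ centroidAsymmetry t d := by
  have hslope : 0 ≤ 35 * (t * (14 * t - 3 * t ^ 2) - 8 * t * d) - (t + 2) * (9 * t ^ 2 + 36) := by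
    have htd : t * d ≤ t * (t - 1) := by gcongr
    have : 0 ≤ t - 1 := sub_nonneg.2 h1
    have : 0 ≤ 2 - t := sub_nonneg.2 h2
    have hcubic : 0 ≤ 250 + 22 * (t - 1) + 264 * (t - 1) * (2 - t)
        + 114 * (t - 1) ^ 2 * (2 - t) := by positivity
    linarith
  have hquad : 0 ≤ 4 * (t + 2) * d ^ 2 := by positivity
  have hsplit : centroidAsymmetry t d - 35 * incenterAsymmetry t d =
      centroidAsymmetry t 0 - 35 * incenterAsymmetry t 0
        + d * (35 * (t * (14 * t - 3 * t ^ 2) - 8 * t * d) - (t + 2) * (9 * t ^ 2 + 36))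
        + 4 * (t + 2) * d ^ 2 := by
    unfold incenterAsymmetry centroidAsymmetry; ring
  linarith [incenterAsymmetry_zero_le h1 h2, mul_nonneg hd0 hslope]

lemma symmedianIncenterForm_one_add_one_sub_le {e : ℝ} (he : |e| ≤ t - 1) (ht : t ≤ 2) :
    symmedianIncenterForm (1 + e) (1 - e) t ≤
      (3 - 2 * √2) ^ 2 *
        ((1 + e + (1 - e) + t) * symmedianCentroidForm (1 + e) (1 - e) t) := by
  have h1 : 1 ≤ t := by linarith [abs_nonneg e]
  have hd : e ^ 2 ≤ t - 1 := by
    calc e ^ 2 = |e| ^ 2 := (sq_abs e).symm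
      _ ≤ |e| := pow_le_of_le_one (abs_nonneg e) (by linarith) two_ne_zero
      _ ≤ t - 1 := he
  have hiso : t ^ 2 ≤ (3 - 2 * √2) ^ 2 * ((t + 1) * (t + 2)) ^ 2 := by
    rw [← mul_pow]
    exact pow_le_pow_left₀ (by linarith) (le_three_sub_two_mul_sqrt_two_mul t) 2
  have hasym : incenterAsymmetry t (e ^ 2) ≤
      (3 - 2 * √2) ^ 2 * centroidAsymmetry t (e ^ 2) := by
    have hconst := mul_le_mul_of_nonneg_right inv_thirtyFive_le_sq_three_sub_two_mul_sqrt_two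
      (centroidAsymmetry_nonneg h1 hd)
    linarith [incenterAsymmetry_le h1 ht (sq_nonneg e) hd]
  have hcoeff : 0 ≤ (t - 1) ^ 2 * (2 - t) := mul_nonneg (sq_nonneg _) (by linarith)
  rw [symmedianIncenterForm_one_add_one_sub, perimeter_mul_symmedianCentroidForm_one_add_one_sub]
  linarith [mul_le_mul_of_nonneg_left hiso hcoeff, mul_le_mul_of_nonneg_left hasym (sq_nonneg e)]

variable {a b c : ℝ}

lemma symmedianIncenterForm_le_of_le (hac : a ≤ c) (hbc : b ≤ c) (hc : c ≤ a + b)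
    (hab : 0 < a + b) :
    symmedianIncenterForm a b c ≤
      (3 - 2 * √2) ^ 2 * ((a + b + c) * symmedianCentroidForm a b c) := by
  obtain ⟨m, hm, rfl⟩ : ∃ m, 0 < m ∧ b = 2 * m - a := ⟨(a + b) / 2, by linarith, by ring⟩
  obtain ⟨e, rfl⟩ : ∃ e, a = m * (1 + e) := ⟨a / m - 1, by field_simp; ring⟩
  obtain ⟨t, rfl⟩ : ∃ t, c = m * t := ⟨c / m, by field_simp⟩
  have hb : 2 * m - m * (1 + e) = m * (1 - e) := by ring
  rw [hb] at hbc hc ⊢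
  have he_le : 1 + e ≤ t := le_of_mul_le_mul_left hac hm
  have hneg_le : 1 - e ≤ t := le_of_mul_le_mul_left hbc hm
  have ht : t ≤ 2 := le_of_mul_le_mul_left (by linarith) hm
  have hnorm := symmedianIncenterForm_one_add_one_sub_le
    (abs_le'.2 ⟨by linarith, by linarith⟩ : |e| ≤ t - 1) ht
  rw [symmedianIncenterForm_mul, symmedianCentroidForm_mul]
  linear_combination m ^ 7 * hnorm

theorem symmedianIncenterForm_le (ha : a ≤ b + c) (hb : b ≤ c + a) (hc : c ≤ a + b)
    (hpos : 0 < a + b + c) :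
    symmedianIncenterForm a b c ≤
      (3 - 2 * √2) ^ 2 * ((a + b + c) * symmedianCentroidForm a b c) := by
  obtain ⟨hac, hbc⟩ | ⟨hba, hca⟩ | ⟨hcb, hab⟩ :
      (a ≤ c ∧ b ≤ c) ∨ (b ≤ a ∧ c ≤ a) ∨ (c ≤ b ∧ a ≤ b) := by grind
  · exact symmedianIncenterForm_le_of_le hac hbc hc (by linarith)
  · rw [← symmedianIncenterForm_rotate, ← symmedianCentroidForm_rotate]
    linear_combination symmedianIncenterForm_le_of_le hba hca ha (by linarith)
  · rw [symmedianIncenterForm_rotate c, symmedianCentroidForm_rotate c]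
    linear_combination symmedianIncenterForm_le_of_le hcb hab hb (by linarith)

end Inequality

section Geometry

variable {V P : Type*} [NormedAddCommGroup V] [InnerProductSpace ℝ V] [MetricSpace P]
  [NormedAddTorsor V P]

/-- The point with barycentric coordinates `(x : y : z)` with respect to three points of a Euclidean
affine space of any dimension; it is meaningful when `x + y + z ≠ 0`. -/
noncomputable def barycentricPoint (A B C : P) (x y z : ℝ) : P :=
  Finset.univ.affineCombination ℝ ![A, B, C] ((x + y + z)⁻¹ • ![x, y, z])

/-- The triangle center with barycentric coordinates `(f a b c : f b c a : f c a b)` in a Euclidean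
affine space, where `a, b, c` are the side lengths. -/
noncomputable def triangleCenter (f : ℝ → ℝ → ℝ → ℝ) (A B C : P) : P :=
  barycentricPoint A B C (f (dist B C) (dist C A) (dist A B))
    (f (dist C A) (dist A B) (dist B C)) (f (dist A B) (dist B C) (dist C A))

lemma sum_inv_smul_eq_one {x y z : ℝ} (h : x + y + z ≠ 0) :
    ∑ i, ((x + y + z)⁻¹ • ![x, y, z]) i = 1 := by
  rw [← inv_mul_cancel₀ h]
  simp [Fin.sum_univ_three, mul_add]

lemma dist_barycentricPoint_sq (A B C : P) {x y z x' y' z' : ℝ}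
    (h : x + y + z ≠ 0) (h' : x' + y' + z' ≠ 0) :
    dist (barycentricPoint A B C x y z) (barycentricPoint A B C x' y' z') ^ 2 =
      -(dist B C ^ 2 * (y / (x + y + z) - y' / (x' + y' + z'))
          * (z / (x + y + z) - z' / (x' + y' + z'))
        + dist C A ^ 2 * (z / (x + y + z) - z' / (x' + y' + z'))
          * (x / (x + y + z) - x' / (x' + y' + z'))
        + dist A B ^ 2 * (x / (x + y + z) - x' / (x' + y' + z'))
          * (y / (x + y + z) - y' / (x' + y' + z'))) := by
  have hdist := EuclideanGeometry.dist_affineCombination ![A, B, C]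
    (sum_inv_smul_eq_one h) (sum_inv_smul_eq_one h')
  rw [sq]
  refine hdist.trans ?_
  simp only [Fin.sum_univ_three, Pi.sub_apply, Matrix.smul_cons, Matrix.smul_empty, smul_eq_mul,
    Matrix.cons_val_zero, Matrix.cons_val_one, Matrix.cons_val, dist_self, dist_comm B A,
    dist_comm C B, dist_comm A C]
  ring

lemma perimeter_pos {A B C : P} (h : ¬(A = B ∧ B = C)) :
    0 < dist B C + dist C A + dist A B := by
  by_contra! hle
  refine h ⟨dist_le_zero.1 ?_, dist_le_zero.1 ?_⟩ <;>
    linarith [dist_nonneg (x := B) (y := C), dist_nonneg (x := C) (y := A),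
      dist_nonneg (x := A) (y := B)]

lemma sum_sq_pos_of_sum_pos {a b c : ℝ} (h : 0 < a + b + c) : 0 < a ^ 2 + b ^ 2 + c ^ 2 := by
  nlinarith [sq_nonneg (a - b), sq_nonneg (b - c), sq_nonneg (c - a)]

lemma dist_symmedian_incenter_sq {A B C : P} {a b c : ℝ} (ha : dist B C = a) (hb : dist C A = b)
    (hc : dist A B = c) (h : 0 < a + b + c) :
    dist (triangleCenter (fun a _ _ => a ^ 2) A B C) (triangleCenter (fun a _ _ => a) A B C) ^ 2 =
      symmedianIncenterForm a b c / ((a + b + c) * (a ^ 2 + b ^ 2 + c ^ 2) ^ 2) := by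
  subst ha hb hc
  have hsq := sum_sq_pos_of_sum_pos h
  unfold triangleCenter symmedianIncenterForm
  rw [dist_barycentricPoint_sq A B C hsq.ne' h.ne']
  field_simp
  ring

lemma dist_symmedian_centroid_sq {A B C : P} {a b c : ℝ} (ha : dist B C = a) (hb : dist C A = b)
    (hc : dist A B = c) (h : 0 < a + b + c) :
    dist (triangleCenter (fun a _ _ => a ^ 2) A B C) (triangleCenter (fun _ _ _ => 1) A B C) ^ 2 =
      symmedianCentroidForm a b c / (3 * (a ^ 2 + b ^ 2 + c ^ 2)) ^ 2 := by
  subst ha hb hc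
  have hsq := sum_sq_pos_of_sum_pos h
  unfold triangleCenter symmedianCentroidForm
  rw [dist_barycentricPoint_sq A B C hsq.ne' (by norm_num)]
  field_simp
  ring

theorem stmt_15_general {A B C : P} (h : ¬(A = B ∧ B = C)) :
    dist (triangleCenter (fun a _ _ => a ^ 2) A B C) (triangleCenter (fun a _ _ => a) A B C) ≤
      (9 - 6 * √2) *
        dist (triangleCenter (fun a _ _ => a ^ 2) A B C)
          (triangleCenter (fun _ _ _ => 1) A B C) := by
  have hconst : 0 ≤ 9 - 6 * √2 := by linarith [three_sub_two_mul_sqrt_two_nonneg]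
  have hpos := perimeter_pos h
  have hform := symmedianIncenterForm_le
    ((dist_comm B C).trans_le (dist_triangle C A B))
    ((dist_comm C A).trans_le (dist_triangle A B C))
    ((dist_comm A B).trans_le (dist_triangle B C A)) hpos
  refine le_of_sq_le_sq ?_ (mul_nonneg hconst dist_nonneg)
  rw [mul_pow, dist_symmedian_incenter_sq rfl rfl rfl hpos,
    dist_symmedian_centroid_sq rfl rfl rfl hpos]
  generalize dist B C = a, dist C A = b, dist A B = c at hpos hform ⊢
  have hsq := sum_sq_pos_of_sum_pos hpos
  calc symmedianIncenterForm a b c / ((a + b + c) * (a ^ 2 + b ^ 2 + c ^ 2) ^ 2)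
      ≤ (3 - 2 * √2) ^ 2 * ((a + b + c) * symmedianCentroidForm a b c) /
          ((a + b + c) * (a ^ 2 + b ^ 2 + c ^ 2) ^ 2) := by gcongr
    _ = (9 - 6 * √2) ^ 2 *
          (symmedianCentroidForm a b c / (3 * (a ^ 2 + b ^ 2 + c ^ 2)) ^ 2) := by
      field_simp
      ring

end Geometry

lemma tcenter_eq_triangleCenter (f : ℝ → ℝ → ℝ → ℝ) (A B C : EuclideanSpace ℝ (Fin 2))
    (h : f (dist B C) (dist C A) (dist A B) + f (dist C A) (dist A B) (dist B C) +
      f (dist A B) (dist B C) (dist C A) ≠ 0) :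
    tcenter f A B C = triangleCenter f A B C := by
  unfold tcenter triangleCenter bary barycentricPoint
  rw [Finset.univ.affineCombination_eq_linear_combination _ _ (sum_inv_smul_eq_one h)]
  simp [Fin.sum_univ_three, mul_smul]

theorem stmt_15 (A B C : EuclideanSpace ℝ (Fin 2))
    (h : AffineIndependent ℝ ![A, B, C]) :
    dist (tcenter (fun a b c => a^2) A B C) (tcenter (fun a b c => a) A B C) ≤ (9 - 6 * Real.sqrt 2) * dist (tcenter (fun a b c => a^2) A B C) (tcenter (fun a b c => (1:Real)) A B C) := by
  have hne : ¬(A = B ∧ B = C) := fun hABC => h.injective.ne zero_ne_one hABC.1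
  have hpos := perimeter_pos hne
  rw [tcenter_eq_triangleCenter _ A B C (sum_sq_pos_of_sum_pos hpos).ne',
    tcenter_eq_triangleCenter _ A B C hpos.ne', tcenter_eq_triangleCenter _ A B C (by norm_num)]
  exact stmt_15_general hne
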